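/- arXiv:1303.5097 — 2 statements merged into one kernel-verified Lean document; each statement's English description precedes it below -/
import Mathlib

section
/- There exist constants C, c > 0 such that for all positive integers N, M, K with K ≤ N and all δ ∈ (0,1], if M ≥ C·δ⁻⁶·K·log(2N/K), then a random M×N matrix Φ with rows φ₁,…,φ_M having independent standard Gaussian N(0,1) entries satisfies, with probability at least 1 − 8·exp(−c·δ²·M): for every a ∈ Σ_K with ‖a‖₂ = 1 and every b of the form b = b₁ − b₂ with b₁, b₂ ∈ Σ_K and ‖b₁‖₂ ≤ 1, ‖b₂‖₂ ≤ 1, one has |(1/M)·Σ_{j=1}^{M} sign(⟨φ_j, a⟩)·⟨φ_j, b⟩ − √(2/π)·⟨a, b⟩| ≤ δ. -/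
/-!
For a fixed pair of unit vectors `a`, `b` and one Gaussian row `φ`, splitting `b` into its parts
along and orthogonal to `a` gives `E[sgn ⟨φ, a⟩ ⟨φ, b⟩] = √(2/π) ⟨a, b⟩` (`integral_sgn_mul_ip`): the
orthogonal part has mean zero by a reflection, and `E|g| = √(2/π)`. The rows are independent, so
Chernoff bounds control three quantities: the deviation of the empirical mean (`sign_mean_tail`),
the number of rows with `|⟨φⱼ, a⟩|` below a threshold of order `δ²` (`small_count_tail`), and the
energy `∑ⱼ ⟨φⱼ, a⟩²` (`energy_tail`).

These events are imposed on all pairs of points of a net, of resolution of order `δ³`, of the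
`K`-sparse unit vectors (`exists_sparse_net`). Its cardinality is at most
`(N choose K) (3/ε)^K`, so the assumption `M ≥ C δ⁻⁶ K log (2N/K)` pays for the union bound
(`net_card_bound`).

On the resulting event the energy bound extends to whole coordinate subspaces (`energy_of_net`).
If `a₀` is a net point close to `a`, the signs of `⟨φⱼ, a⟩` and `⟨φⱼ, a₀⟩` differ only where
`|⟨φⱼ, a₀⟩|` is small or `|⟨φⱼ, a - a₀⟩|` is large (`sgn_sub_sq_le`), hence for a proportion of order
`δ²` of the rows, and Cauchy–Schwarz makes the resulting error of order `δ` (`dev_of_net`).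
Linearity in `b` then covers the differences `b₁ - b₂`.
-/

open Finset MeasureTheory ProbabilityTheory Real

/-- componentwise sign function: 1 if positive, -1 otherwise -/
noncomputable def sgn (t : ℝ) : ℝ := if 0 < t then 1 else -1

/-- ℓ1 norm -/
noncomputable def l1 {m : ℕ} (w : Fin m → ℝ) : ℝ := ∑ j, |w j|

/-- ℓ2 (Euclidean) norm -/
noncomputable def l2 {m : ℕ} (w : Fin m → ℝ) : ℝ := Real.sqrt (∑ j, w j ^ 2)

/-- ℓ0 "norm": number of nonzero entries -/
noncomputable def l0 {m : ℕ} (w : Fin m → ℝ) : ℕ :=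
  (Finset.univ.filter fun i => w i ≠ 0).card

/-- K-sparsity: membership in Σ_K -/
noncomputable def sparse {n : ℕ} (K : ℕ) (u : Fin n → ℝ) : Prop := l0 u ≤ K

/-- Euclidean inner product -/
noncomputable def ip {m : ℕ} (u v : Fin m → ℝ) : ℝ := ∑ j, u j * v j

/-- restriction of a vector to a set of indices (zero outside) -/
noncomputable def restrict {n : ℕ} (u : Fin n → ℝ) (S : Finset (Fin n)) : Fin n → ℝ :=
  fun i => if i ∈ S then u i else 0

/-- `xK` is a best K-term approximation of `x` -/
noncomputable def IsBestKTermApprox {n : ℕ} (K : ℕ) (x xK : Fin n → ℝ) : Prop :=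
  ∃ S : Finset (Fin n), S.card = K ∧ (∀ i ∈ S, xK i = x i) ∧ (∀ i ∉ S, xK i = 0) ∧
    ∀ i ∈ S, ∀ j ∉ S, |x j| ≤ |x i|

/-! ### Gaussian projections -/

lemma sgn_mul_self (t : ℝ) : sgn t * t = |t| := by
  unfold sgn
  split_ifs with h
  · rw [abs_of_pos h, one_mul]
  · rw [abs_of_nonpos (not_lt.mp h)]; ring

lemma abs_sgn (t : ℝ) : |sgn t| = 1 := by
  unfold sgn; split_ifs <;> simp

lemma measurable_sgn : Measurable sgn :=
  Measurable.ite measurableSet_Ioi measurable_const measurable_const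

lemma ip_eq_inner {n : ℕ} (u v : Fin n → ℝ) :
    ip u v = inner ℝ (WithLp.toLp 2 u) (WithLp.toLp 2 v) := by
  simp [ip, PiLp.inner_apply, mul_comm]

lemma l2_eq_norm {n : ℕ} (u : Fin n → ℝ) : l2 u = ‖WithLp.toLp 2 u‖ := by
  simp [l2, EuclideanSpace.norm_eq]

lemma measurable_ip {n : ℕ} (a : Fin n → ℝ) : Measurable fun φ : Fin n → ℝ => ip φ a := by
  unfold ip; fun_prop

/-- The law of one row of the random matrix: the standard Gaussian measure on `ℝⁿ`. -/
noncomputable abbrev rowLaw (n : ℕ) : Measure (Fin n → ℝ) :=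
  Measure.pi fun _ : Fin n => gaussianReal 0 1

lemma map_ip_rowLaw {n : ℕ} {a : Fin n → ℝ} (ha : l2 a = 1) :
    (rowLaw n).map (fun φ => ip φ a) = gaussianReal 0 1 := by
  apply Measure.ext_of_charFun
  ext t
  have h1 : charFun (stdGaussian (EuclideanSpace ℝ (Fin n))) (t • WithLp.toLp 2 a) =
      Complex.exp (-(t ^ 2) / 2) := by
    rw [charFun_stdGaussian, norm_smul, ← l2_eq_norm, ha]
    simp [← Complex.ofReal_pow]
  rw [charFun_gaussianReal, charFun_apply_real, integral_map (measurable_ip a).aemeasurable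
    (Measurable.aestronglyMeasurable (by fun_prop))]
  rw [← map_pi_eq_stdGaussian, charFun_apply, integral_map (by fun_prop)
    (Measurable.aestronglyMeasurable (by fun_prop))] at h1
  simp only [real_inner_smul_right, ← ip_eq_inner, Complex.ofReal_mul] at h1
  rw [h1]
  simp [neg_div]

lemma integral_comp_ip {n : ℕ} {a : Fin n → ℝ} (ha : l2 a = 1) {f : ℝ → ℝ} (hf : Measurable f) :
    ∫ φ, f (ip φ a) ∂(rowLaw n) = ∫ x, f x ∂(gaussianReal 0 1) := by
  rw [← map_ip_rowLaw ha, integral_map (measurable_ip a).aemeasurable hf.aestronglyMeasurable]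

lemma integrable_comp_ip {n : ℕ} {a : Fin n → ℝ} (ha : l2 a = 1) {f : ℝ → ℝ}
    (hf : Measurable f) (hi : Integrable f (gaussianReal 0 1)) :
    Integrable (fun φ => f (ip φ a)) (rowLaw n) := by
  rw [← map_ip_rowLaw ha] at hi
  exact (integrable_map_measure hf.aestronglyMeasurable (measurable_ip a).aemeasurable).1 hi

/-- The reflection in the hyperplane orthogonal to `b` preserves the Gaussian measure, fixes
`⟨φ, a⟩` and negates `⟨φ, b⟩`; hence the integral equals its own negative. -/
lemma integral_sgn_of_orthogonal {n : ℕ} {a b : Fin n → ℝ} (hab : ip a b = 0) :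
    ∫ φ, sgn (ip φ a) * ip φ b ∂(rowLaw n) = 0 := by
  set E := EuclideanSpace ℝ (Fin n)
  set A : E := WithLp.toLp 2 a
  set B : E := WithLp.toLp 2 b
  have hAB : inner ℝ A B = 0 := by rw [← ip_eq_inner]; exact hab
  have hm : Measurable fun x : E => sgn (inner ℝ x A) * inner ℝ x B :=
    (measurable_sgn.comp (by fun_prop)).mul (by fun_prop)
  have h1 : ∫ φ, sgn (ip φ a) * ip φ b ∂(rowLaw n) =
      ∫ x : E, sgn (inner ℝ x A) * inner ℝ x B ∂(stdGaussian E) := by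
    rw [← map_pi_eq_stdGaussian, integral_map (by fun_prop) hm.aestronglyMeasurable]
    simp only [ip_eq_inner]
    rfl
  rw [h1]
  let f := (ℝ ∙ B)ᗮ.reflection
  have fB : f B = -B := Submodule.reflection_orthogonalComplement_singleton_eq_neg B
  have fA : f A = A := by
    apply Submodule.reflection_mem_subspace_eq_self
    rw [Submodule.mem_orthogonal_singleton_iff_inner_right, real_inner_comm]
    exact hAB
  have key : ∀ x, inner ℝ (f x) A = inner ℝ x A ∧ inner ℝ (f x) B = -inner ℝ x B := by
    intro x
    constructor
    · conv_lhs => rw [← fA]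
      exact f.inner_map_map x A
    · have := f.inner_map_map x B
      rw [fB, inner_neg_right] at this
      linarith
  have h2 : ∫ x : E, sgn (inner ℝ x A) * inner ℝ x B ∂(stdGaussian E) =
      -∫ x : E, sgn (inner ℝ x A) * inner ℝ x B ∂(stdGaussian E) := by
    conv_lhs => rw [← stdGaussian_map f]
    rw [integral_map (by fun_prop) hm.aestronglyMeasurable, ← integral_neg]
    simp only [key, mul_neg]
  linarith

lemma integral_abs_gaussian : ∫ x, |x| ∂(gaussianReal 0 1) = √(2 / π) := by
  rw [integral_gaussianReal_eq_integral_smul one_ne_zero]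
  have h1 : ∀ x : ℝ, gaussianPDFReal 0 1 x • |x| =
      (√(2 * π))⁻¹ * (fun y : ℝ => y * rexp (-(1 / 2) * y ^ 2)) |x| := by
    intro x
    simp [gaussianPDFReal]
    rw [show -x ^ 2 / 2 = -(2⁻¹ * x ^ 2) by ring]
    ring
  simp_rw [h1]
  rw [integral_const_mul, integral_comp_abs (f := fun y : ℝ => y * rexp (-(1 / 2) * y ^ 2))]
  have h2 : ∫ x in Set.Ioi (0 : ℝ), x * rexp (-(1 / 2) * x ^ 2) = 1 := by
    have := integral_rpow_mul_exp_neg_mul_rpow (p := 2) (q := 1) (b := 1 / 2) two_pos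
      (by norm_num) (by norm_num)
    norm_num at this ⊢
    exact this
  rw [h2]
  have h3 : √(2 / π) * √(2 * π) = 2 := by
    rw [← Real.sqrt_mul (by positivity),
      show 2 / π * (2 * π) = 2 ^ 2 by field_simp]
    exact Real.sqrt_sq (by norm_num)
  have h4 : √(2 * π) ≠ 0 := by positivity
  field_simp
  linarith

lemma integrable_exp_sq_gaussian :
    Integrable (fun x : ℝ => rexp (x ^ 2 / 4)) (gaussianReal 0 1) ∧
      ∫ x, rexp (x ^ 2 / 4) ∂(gaussianReal 0 1) = √2 := by
  have h1 : ∀ x : ℝ, gaussianPDFReal 0 1 x • rexp (x ^ 2 / 4) =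
      (√(2 * π))⁻¹ * rexp (-(1 / 4) * x ^ 2) := by
    intro x
    simp only [gaussianPDFReal, NNReal.coe_one, smul_eq_mul, mul_one, sub_zero]
    rw [mul_assoc, ← Real.exp_add]
    congr 2; ring
  constructor
  · rw [gaussianReal_of_var_ne_zero _ one_ne_zero]
    rw [integrable_withDensity_iff_integrable_smul' (by fun_prop) (by simp [gaussianPDF])]
    simp only [toReal_gaussianPDF, h1]
    exact (integrable_exp_neg_mul_sq (by norm_num)).const_mul _
  · rw [integral_gaussianReal_eq_integral_smul one_ne_zero]
    simp_rw [h1]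
    rw [integral_const_mul, integral_gaussian]
    have h4 : √(2 * π) ≠ 0 := by positivity
    field_simp
    rw [← Real.sqrt_mul (by positivity)]
    congr 1; ring

lemma gaussian_small_ball {τ : ℝ} (hτ : 0 ≤ τ) :
    (gaussianReal 0 1).real (Set.Icc (-τ) τ) ≤ τ := by
  rw [measureReal_def, gaussianReal_apply_eq_integral 0 one_ne_zero]
  have hb : ∀ x, gaussianPDFReal 0 1 x ≤ 1 / 2 := by
    intro x
    simp only [gaussianPDFReal, NNReal.coe_one, mul_one, sub_zero]
    have h2 : 2 ≤ √(2 * π) := Real.le_sqrt_of_sq_le (by nlinarith [Real.pi_gt_three])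
    have h3 : (√(2 * π))⁻¹ ≤ 1 / 2 := by
      rw [one_div]; exact inv_anti₀ (by norm_num) h2
    have h4 : rexp (-x ^ 2 / 2) ≤ 1 := Real.exp_le_one_iff.2 (by nlinarith [sq_nonneg x])
    calc _ ≤ (1 / 2) * (1 : ℝ) := by gcongr
      _ = _ := by ring
  rw [ENNReal.toReal_ofReal (setIntegral_nonneg measurableSet_Icc
    fun x _ => gaussianPDFReal_nonneg _ _ _)]
  calc _ ≤ ∫ x in Set.Icc (-τ) τ, (1 / 2 : ℝ) :=
        setIntegral_mono (integrable_gaussianPDFReal 0 1).integrableOn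
          (by simp) hb
    _ = τ := by
        simp [Real.volume_real_Icc, hτ]
        ring

/-! ### Tail bounds for fixed vectors -/

/-- Chernoff's bound for sums of i.i.d. variables: an exponential moment below `exp (-q)` makes a
nonnegative sum exponentially unlikely. -/
lemma chernoff {X : Type*} [MeasurableSpace X] (ν : Measure X) [IsProbabilityMeasure ν]
    {h : X → ℝ} {q : ℝ} (hi : Integrable (fun x => rexp (h x)) ν)
    (hle : ∫ x, rexp (h x) ∂ν ≤ rexp (-q)) (M : ℕ) :
    (Measure.pi fun _ : Fin M => ν) {Φ | 0 ≤ ∑ j, h (Φ j)} ≤ ENNReal.ofReal (rexp (-(q * M))) := by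
  have hI : Integrable (fun Φ : Fin M → X => ∏ j, rexp (h (Φ j))) (Measure.pi fun _ => ν) :=
    Integrable.fintype_prod (f := fun _ x => rexp (h x)) fun _ => hi
  have h1 := mul_meas_ge_le_integral_of_nonneg (μ := Measure.pi fun _ : Fin M => ν)
    (Filter.Eventually.of_forall fun Φ => Finset.prod_nonneg fun j _ => (Real.exp_pos _).le) hI 1
  rw [integral_fintype_prod_eq_pow (fun x => rexp (h x)), Fintype.card_fin, one_mul] at h1
  have h2 : {Φ : Fin M → X | 0 ≤ ∑ j, h (Φ j)} = {Φ | 1 ≤ ∏ j, rexp (h (Φ j))} := by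
    ext Φ
    simp [← Real.exp_sum]
  rw [h2, ← ENNReal.ofReal_toReal (measure_ne_top _ _)]
  apply ENNReal.ofReal_le_ofReal
  refine h1.trans ?_
  calc _ ≤ rexp (-q) ^ M := by
        gcongr
    _ = _ := by rw [← Real.exp_nat_mul]; congr 1; ring

lemma integrable_ip {n : ℕ} (b : Fin n → ℝ) : Integrable (fun φ => ip φ b) (rowLaw n) := by
  unfold ip
  refine integrable_finsetSum _ fun i _ => Integrable.mul_const ?_ _
  exact integrable_comp_eval (μ := fun _ : Fin n => gaussianReal 0 1) (f := fun x => x)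
    ((memLp_id_gaussianReal 1).integrable le_rfl)

lemma integrable_sgn_mul_ip {n : ℕ} (a b : Fin n → ℝ) :
    Integrable (fun φ => sgn (ip φ a) * ip φ b) (rowLaw n) := by
  refine (integrable_ip b).norm.mono'
    (((measurable_sgn.comp (measurable_ip a)).mul (measurable_ip b)).aestronglyMeasurable) ?_
  refine Filter.Eventually.of_forall fun φ => ?_
  simp [abs_sgn]

/-- Splitting `b` into its component along `a` and the component orthogonal to `a` reduces the
expectation to the first absolute moment of a standard Gaussian variable. -/
lemma integral_sgn_mul_ip {n : ℕ} {a : Fin n → ℝ} (ha : l2 a = 1) (b : Fin n → ℝ) :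
    ∫ φ, sgn (ip φ a) * ip φ b ∂(rowLaw n) = √(2 / π) * ip a b := by
  have haa : ip a a = 1 := by
    rw [ip_eq_inner, real_inner_self_eq_norm_sq, ← l2_eq_norm, ha]; norm_num
  have hsplit : ∀ u : Fin n → ℝ, ip u b = ip a b * ip u a + ip u (b - ip a b • a) := by
    intro u
    unfold ip
    simp only [Pi.sub_apply, Pi.smul_apply, smul_eq_mul, mul_sub, Finset.sum_sub_distrib]
    have : ∑ x, u x * ((∑ j, a j * b j) * a x) = (∑ j, a j * b j) * ∑ x, u x * a x := by
      rw [Finset.mul_sum]; refine Finset.sum_congr rfl fun x _ => by ring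
    linarith
  have horth : ip a (b - ip a b • a) = 0 := by
    have := hsplit a
    rw [haa] at this; linarith
  have h1 : ∀ φ : Fin n → ℝ, sgn (ip φ a) * ip φ b =
      ip a b * |ip φ a| + sgn (ip φ a) * ip φ (b - ip a b • a) := by
    intro φ
    rw [hsplit φ, ← sgn_mul_self]; ring
  simp_rw [h1]
  rw [integral_add ((integrable_ip a).abs.const_mul _) (integrable_sgn_mul_ip _ _),
    integral_sgn_of_orthogonal horth, integral_const_mul,
    integral_comp_ip ha (f := fun x => |x|) (by fun_prop), integral_abs_gaussian]
  ring

lemma exp_le_quadratic (x : ℝ) : rexp x ≤ 1 + x + x ^ 2 * rexp |x| := by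
  rcases le_or_gt |x| 1 with h | h
  · have h1 := (abs_le.1 (Real.abs_exp_sub_one_sub_id_le h)).2
    have h2 : 1 ≤ rexp |x| := Real.one_le_exp (abs_nonneg x)
    nlinarith [sq_nonneg x]
  · rcases le_or_gt 0 x with h0 | h0
    · rw [abs_of_nonneg h0] at h ⊢
      have h2 : 1 ≤ x ^ 2 := by nlinarith
      nlinarith [Real.exp_pos x]
    · rw [abs_of_neg h0] at h ⊢
      have h2 : 1 ≤ rexp (-x) := Real.one_le_exp (by linarith)
      have h3 : rexp x ≤ 1 := Real.exp_le_one_iff.2 h0.le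
      nlinarith [sq_nonneg x]

lemma exp_mul_le_quadratic {s w : ℝ} (hs : |s| ≤ 1) :
    rexp (s * w) ≤ 1 + s * w + 2 * s ^ 2 * rexp (2 * |w|) := by
  have h1 := exp_le_quadratic (s * w)
  have h2 : rexp |s * w| ≤ rexp |w| := by
    rw [abs_mul]; apply Real.exp_le_exp.2
    nlinarith [abs_nonneg w]
  have h3 : w ^ 2 ≤ 2 * rexp |w| := by
    have := Real.quadratic_le_exp_of_nonneg (abs_nonneg w)
    rw [sq_abs] at this
    linarith [abs_nonneg w]
  have h4 : rexp (2 * |w|) = rexp |w| * rexp |w| := by rw [← Real.exp_add]; ring_nf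
  have h5 : (s * w) ^ 2 * rexp |s * w| ≤ s ^ 2 * (2 * rexp |w|) * rexp |w| := by
    rw [mul_pow]; gcongr
  rw [h4]; linarith

lemma sqrt_two_div_pi_le_one : √(2 / π) ≤ 1 := by
  rw [Real.sqrt_le_left (by norm_num), one_pow, div_le_one Real.pi_pos]
  linarith [Real.pi_gt_three]

lemma abs_ip_le {n : ℕ} (a b : Fin n → ℝ) : |ip a b| ≤ l2 a * l2 b := by
  rw [ip_eq_inner, l2_eq_norm, l2_eq_norm]; exact abs_real_inner_le_norm _ _

lemma integral_exp_mul_gaussian (t : ℝ) :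
    ∫ x, rexp (t * x) ∂(gaussianReal 0 1) = rexp (t ^ 2 / 2) := by
  have := congrFun (mgf_id_gaussianReal (μ := 0) (v := 1)) t
  simpa [mgf] using this

/-- Sub-Gaussian moment bound for the centred variable, in the range `|s| ≤ 1` only. -/
lemma mgf_sgn_mul_ip {n : ℕ} {a b : Fin n → ℝ} (ha : l2 a = 1) (hb : l2 b = 1) {s : ℝ}
    (hs : |s| ≤ 1) :
    Integrable (fun φ => rexp (s * (sgn (ip φ a) * ip φ b - √(2 / π) * ip a b))) (rowLaw n) ∧
    ∫ φ, rexp (s * (sgn (ip φ a) * ip φ b - √(2 / π) * ip a b)) ∂(rowLaw n)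
      ≤ rexp (256 * s ^ 2) := by
  set m := √(2 / π) * ip a b with hm
  have hm1 : |m| ≤ 1 := by
    have h1 := abs_ip_le a b
    rw [ha, hb] at h1
    rw [hm, abs_mul, abs_of_nonneg (Real.sqrt_nonneg _)]
    nlinarith [sqrt_two_div_pi_le_one, abs_nonneg (ip a b), Real.sqrt_nonneg (2 / π)]
  set U : (Fin n → ℝ) → ℝ := fun φ => (1 + s * (sgn (ip φ a) * ip φ b - m)) +
    2 * s ^ 2 * rexp 2 * (rexp (2 * ip φ b) + rexp (-2 * ip φ b)) with hU
  have hle : ∀ φ, rexp (s * (sgn (ip φ a) * ip φ b - m)) ≤ U φ := by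
    intro φ
    refine (exp_mul_le_quadratic hs).trans ?_
    have h1 : |sgn (ip φ a) * ip φ b - m| ≤ |ip φ b| + 1 := by
      refine (abs_sub _ _).trans ?_
      rw [abs_mul, abs_sgn, one_mul]; linarith
    have h2 : rexp (2 * |sgn (ip φ a) * ip φ b - m|) ≤
        rexp 2 * (rexp (2 * ip φ b) + rexp (-2 * ip φ b)) := by
      calc _ ≤ rexp (2 + 2 * |ip φ b|) := Real.exp_le_exp.2 (by linarith)
        _ = rexp 2 * rexp (2 * |ip φ b|) := Real.exp_add _ _
        _ ≤ _ := by
          gcongr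
          rcases abs_cases (ip φ b) with ⟨h, _⟩ | ⟨h, _⟩ <;> rw [h]
          · linarith [Real.exp_pos (-2 * ip φ b)]
          · rw [show 2 * -ip φ b = -2 * ip φ b by ring]; linarith [Real.exp_pos (2 * ip φ b)]
    simp only [hU]
    rw [mul_assoc (2 * s ^ 2)]
    gcongr
  have hiW : Integrable (fun φ => sgn (ip φ a) * ip φ b - m) (rowLaw n) :=
    (integrable_sgn_mul_ip a b).sub (integrable_const m)
  have hW0 : ∫ φ, (sgn (ip φ a) * ip φ b - m) ∂(rowLaw n) = 0 := by
    rw [integral_sub (integrable_sgn_mul_ip a b) (integrable_const m), integral_sgn_mul_ip ha]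
    simp [hm]
  have hie : ∀ t : ℝ, Integrable (fun φ => rexp (t * ip φ b)) (rowLaw n) := fun t =>
    integrable_comp_ip hb (f := fun x => rexp (t * x)) (by fun_prop)
      (integrable_exp_mul_gaussianReal t)
  have hee : ∀ t : ℝ, ∫ φ, rexp (t * ip φ b) ∂(rowLaw n) = rexp (t ^ 2 / 2) := fun t => by
    rw [integral_comp_ip hb (f := fun x => rexp (t * x)) (by fun_prop), integral_exp_mul_gaussian]
  have hi1 : Integrable (fun φ => 1 + s * (sgn (ip φ a) * ip φ b - m)) (rowLaw n) :=
    (integrable_const 1).add (hiW.const_mul s)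
  have hi2 : Integrable (fun φ => 2 * s ^ 2 * rexp 2 * (rexp (2 * ip φ b) + rexp (-2 * ip φ b)))
      (rowLaw n) := ((hie 2).add (hie (-2))).const_mul _
  have hiU : Integrable U (rowLaw n) := hi1.add hi2
  have hIe : Integrable (fun φ => rexp (s * (sgn (ip φ a) * ip φ b - m))) (rowLaw n) := by
    refine hiU.mono' ?_ (Filter.Eventually.of_forall fun φ => ?_)
    · exact (Real.measurable_exp.comp ((((measurable_sgn.comp (measurable_ip a)).mul
        (measurable_ip b)).sub_const m).const_mul s)).aestronglyMeasurable
    · rw [Real.norm_eq_abs, Real.abs_exp]; exact hle φ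
  refine ⟨hIe, (integral_mono hIe hiU hle).trans ?_⟩
  rw [hU, integral_add hi1 hi2, integral_add (integrable_const 1) (hiW.const_mul s),
    integral_const_mul, hW0, integral_const_mul, integral_add (hie 2) (hie (-2)), hee, hee]
  have h64 : rexp 2 * rexp 2 ≤ 64 := by
    have : rexp 2 ≤ 8 := by
      have h := Real.exp_one_lt_d9
      rw [show (2 : ℝ) = 1 + 1 by norm_num, Real.exp_add]
      nlinarith [Real.exp_pos 1]
    nlinarith [Real.exp_pos 2]
  have h256 := Real.add_one_le_exp (256 * s ^ 2)
  norm_num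
  nlinarith [sq_nonneg s]

/-- The law of the random matrix, as a product over its rows. -/
noncomputable abbrev matLaw (M n : ℕ) : Measure (Fin M → Fin n → ℝ) :=
  Measure.pi fun _ : Fin M => rowLaw n

/-- Concentration of the empirical sign product for one fixed pair of unit vectors. -/
lemma sign_mean_tail {n : ℕ} (M : ℕ) {a b : Fin n → ℝ} (ha : l2 a = 1) (hb : l2 b = 1) {t : ℝ}
    (ht : 0 < t) (ht1 : t ≤ 1) :
    matLaw M n {Φ | M * t < |∑ j, (sgn (ip (Φ j) a) * ip (Φ j) b - √(2 / π) * ip a b)|} ≤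
      2 * ENNReal.ofReal (rexp (-(t ^ 2 / 1024 * M))) := by
  -- Chernoff's bound for both signs, at the optimal parameter `± t / 512`.
  have key : ∀ σ : ℝ, |σ| = 1 →
      matLaw M n {Φ | 0 ≤ ∑ j, (σ * t / 512 *
        (sgn (ip (Φ j) a) * ip (Φ j) b - √(2 / π) * ip a b) + -(t ^ 2 / 512))} ≤
      ENNReal.ofReal (rexp (-(t ^ 2 / 1024 * M))) := by
    intro σ hσ
    have hs : |σ * t / 512| ≤ 1 := by
      rw [abs_div, abs_mul, hσ, abs_of_pos ht]; norm_num; linarith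
    have hσ2 : σ ^ 2 = 1 := by rw [← sq_abs, hσ]; norm_num
    obtain ⟨h1, h2⟩ := mgf_sgn_mul_ip ha hb hs
    apply chernoff (rowLaw n) (h := fun φ => σ * t / 512 *
        (sgn (ip φ a) * ip φ b - √(2 / π) * ip a b) + -(t ^ 2 / 512))
    · simp_rw [Real.exp_add]
      exact h1.mul_const _
    · simp_rw [Real.exp_add]
      rw [integral_mul_const]
      calc _ ≤ rexp (256 * (σ * t / 512) ^ 2) * rexp (-(t ^ 2 / 512)) := by gcongr
        _ = _ := by
          rw [← Real.exp_add, div_pow, mul_pow, hσ2]; congr 1; ring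
  rw [two_mul]
  refine le_trans (measure_mono ?_) ((measure_union_le _ _).trans
    (add_le_add (key 1 (by simp)) (key (-1) (by simp))))
  intro Φ hΦ
  simp only [Set.mem_ofPred_eq, Set.mem_union, Finset.sum_add_distrib, ← Finset.mul_sum,
    Finset.sum_const, Finset.card_univ, Fintype.card_fin, nsmul_eq_mul] at hΦ ⊢
  rcases lt_abs.1 hΦ with h | h
  · left; nlinarith
  · right; nlinarith

/-- Chernoff's bound with the exponential moment `E exp (g² / 4) = √2`. -/
lemma energy_tail {n : ℕ} (M : ℕ) {a : Fin n → ℝ} (ha : l2 a = 1) :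
    matLaw M n {Φ | 4 * M < ∑ j, ip (Φ j) a ^ 2} ≤ ENNReal.ofReal (rexp (-(1 / 2 * M))) := by
  refine le_trans (measure_mono ?_)
    (chernoff (rowLaw n) (h := fun φ => ip φ a ^ 2 / 4 + -1) ?_ ?_ M)
  · intro Φ hΦ
    simp only [Set.mem_ofPred_eq, Finset.sum_add_distrib, ← Finset.sum_div,
      Finset.sum_const, Finset.card_univ, Fintype.card_fin, nsmul_eq_mul] at hΦ ⊢
    linarith
  · simp_rw [Real.exp_add]
    exact (integrable_comp_ip ha (f := fun x => rexp (x ^ 2 / 4)) (by fun_prop)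
      integrable_exp_sq_gaussian.1).mul_const _
  · simp_rw [Real.exp_add]
    rw [integral_mul_const, integral_comp_ip ha (f := fun x => rexp (x ^ 2 / 4)) (by fun_prop),
      integrable_exp_sq_gaussian.2]
    have h1 : √2 ≤ rexp (1 / 2) := by
      rw [show (1 / 2 : ℝ) = 1 * (1 / 2) by ring, Real.exp_mul, ← Real.sqrt_eq_rpow]
      exact Real.sqrt_le_sqrt (by linarith [Real.add_one_le_exp 1])
    calc _ ≤ rexp (1 / 2) * rexp (-1) := by gcongr
      _ = _ := by rw [← Real.exp_add]; norm_num

/-- Few rows are nearly orthogonal to a fixed unit vector: each is so with probability at most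
`t / 4`, by the boundedness of the Gaussian density. -/
lemma small_count_tail {n : ℕ} (M : ℕ) {a : Fin n → ℝ} (ha : l2 a = 1) {t : ℝ} (ht : 0 < t) :
    matLaw M n {Φ | M * t < ∑ j, if |ip (Φ j) a| ≤ t / 4 then (1 : ℝ) else 0} ≤
      ENNReal.ofReal (rexp (-(t / 2 * M))) := by
  set f : ℝ → ℝ := fun x => rexp ((if |x| ≤ t / 4 then (1 : ℝ) else 0) + -t) with hf
  have hmeas : MeasurableSet {x : ℝ | |x| ≤ t / 4} := measurableSet_le (by fun_prop) (by fun_prop)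
  have hset : {x : ℝ | |x| ≤ t / 4} = Set.Icc (-(t / 4)) (t / 4) := by ext x; simp [abs_le]
  have hfm : Measurable f :=
    Real.measurable_exp.comp ((Measurable.ite hmeas measurable_const measurable_const).add_const _)
  have hfe : f = fun x => rexp (-t) + rexp (-t) * (rexp 1 - 1) *
      Set.indicator {x : ℝ | |x| ≤ t / 4} (fun _ => (1 : ℝ)) x := by
    ext x
    simp only [hf, Set.indicator_apply, Set.mem_ofPred_eq]
    split_ifs
    · rw [Real.exp_add]; ring
    · simp
  have hind : Integrable (Set.indicator {x : ℝ | |x| ≤ t / 4} (fun _ => (1 : ℝ)))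
      (gaussianReal 0 1) := (integrable_const _).indicator hmeas
  have hfi : Integrable f (gaussianReal 0 1) := by
    rw [hfe]; exact (integrable_const _).add (hind.const_mul _)
  refine le_trans (measure_mono ?_) (chernoff (rowLaw n)
    (h := fun φ => (if |ip φ a| ≤ t / 4 then (1 : ℝ) else 0) + -t)
    (integrable_comp_ip ha hfm hfi) ?_ M)
  · intro Φ hΦ
    simp only [Set.mem_ofPred_eq, Finset.sum_add_distrib,
      Finset.sum_const, Finset.card_univ, Fintype.card_fin, nsmul_eq_mul] at hΦ ⊢
    linarith
  · rw [integral_comp_ip ha hfm, hfe, integral_add (integrable_const _) (hind.const_mul _),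
      integral_const_mul, integral_indicator_const _ hmeas, hset]
    have h1 := gaussian_small_ball (τ := t / 4) (by linarith)
    have h2 := Real.exp_one_lt_d9
    have h2' := Real.add_one_le_exp 1
    have h3 := Real.add_one_le_exp (t / 2)
    have h4 : rexp (-(t / 2)) = rexp (-t) * rexp (t / 2) := by rw [← Real.exp_add]; congr 1; ring
    simp only [integral_const, probReal_univ, smul_eq_mul, one_mul, mul_one]
    rw [h4, mul_assoc, ← mul_one_add]
    gcongr
    nlinarith [measureReal_nonneg (μ := gaussianReal 0 1) (s := Set.Icc (-(t / 4)) (t / 4))]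

/-! ### Nets of sparse vectors -/

lemma card_le_of_separated_sphere {E : Type*} [NormedAddCommGroup E] [NormedSpace ℝ E]
    [FiniteDimensional ℝ E] {ε : ℝ} (hε : 0 < ε) (hε1 : ε ≤ 1) (s : Finset E)
    (hs : ∀ c ∈ s, ‖c‖ = 1) (h : ∀ c ∈ s, ∀ d ∈ s, c ≠ d → ε ≤ ‖c - d‖) :
    (s.card : ℝ) ≤ (3 / ε) ^ Module.finrank ℝ E := by
  -- The balls of radius `ε / 2` around the points of `s` are disjoint and lie in the ball of
  -- radius `1 + ε / 2`; compare volumes.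
  borelize E
  let μ : Measure E := Measure.addHaar
  have hr : 0 < ε / 2 := by positivity
  have hρ : 0 < 1 + ε / 2 := by positivity
  have D : Set.Pairwise (s : Set E) (Function.onFun Disjoint fun c => Metric.ball c (ε / 2)) := by
    rintro c hc d hd hcd
    apply Metric.ball_disjoint_ball
    rw [dist_eq_norm]
    linarith [h c hc d hd hcd]
  have hsub : (⋃ c ∈ s, Metric.ball c (ε / 2)) ⊆ Metric.ball (0 : E) (1 + ε / 2) := by
    refine Set.iUnion₂_subset fun x hx => Metric.ball_subset_ball' ?_
    rw [dist_zero_right, hs x hx]; linarith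
  have I : (s.card : ENNReal) * ENNReal.ofReal ((ε / 2) ^ Module.finrank ℝ E) *
      μ (Metric.ball 0 1) ≤
      ENNReal.ofReal ((1 + ε / 2) ^ Module.finrank ℝ E) * μ (Metric.ball 0 1) := by
    have h1 := measure_mono (μ := μ) hsub
    rw [measure_biUnion_finset D fun c _ => measurableSet_ball] at h1
    simp only [μ.addHaar_ball_of_pos _ hr, μ.addHaar_ball_of_pos _ hρ, Finset.sum_const,
      nsmul_eq_mul] at h1
    rwa [mul_assoc]
  have J : (s.card : ENNReal) * ENNReal.ofReal ((ε / 2) ^ Module.finrank ℝ E) ≤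
      ENNReal.ofReal ((1 + ε / 2) ^ Module.finrank ℝ E) :=
    (ENNReal.mul_le_mul_iff_left (Metric.measure_ball_pos _ _ zero_lt_one).ne'
      measure_ball_lt_top.ne).1 I
  have J' := ENNReal.toReal_le_of_le_ofReal (by positivity) J
  rw [ENNReal.toReal_mul, ENNReal.toReal_natCast, ENNReal.toReal_ofReal (by positivity)] at J'
  rw [← le_div_iff₀ (by positivity), ← div_pow] at J'
  refine J'.trans (pow_le_pow_left₀ (by positivity) ?_ _)
  rw [div_le_div_iff₀ hr hε]
  nlinarith

/-- A maximal `ε`-separated subset of the unit sphere is an `ε`-net of it. -/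
lemma exists_sphere_net (E : Type*) [NormedAddCommGroup E] [NormedSpace ℝ E]
    [FiniteDimensional ℝ E] {ε : ℝ} (hε : 0 < ε) (hε1 : ε ≤ 1) :
    ∃ T : Finset E, (∀ x ∈ T, ‖x‖ = 1) ∧ (T.card : ℝ) ≤ (3 / ε) ^ Module.finrank ℝ E ∧
      ∀ x : E, ‖x‖ = 1 → ∃ y ∈ T, ‖x - y‖ ≤ ε := by
  classical
  set P : Set ℕ := {k | ∃ T : Finset E, (∀ x ∈ T, ‖x‖ = 1) ∧
    (∀ c ∈ T, ∀ d ∈ T, c ≠ d → ε ≤ ‖c - d‖) ∧ T.card = k} with hP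
  have hne : P.Nonempty := ⟨0, ∅, by simp, by simp, by simp⟩
  have hbdd : BddAbove P := by
    refine ⟨⌊(3 / ε) ^ Module.finrank ℝ E⌋₊, ?_⟩
    rintro k ⟨T, h1, h2, rfl⟩
    exact Nat.le_floor (card_le_of_separated_sphere hε hε1 T h1 h2)
  obtain ⟨T, h1, h2, h3⟩ := Nat.sSup_mem hne hbdd
  refine ⟨T, h1, card_le_of_separated_sphere hε hε1 T h1 h2, fun x hx => ?_⟩
  by_contra! hcon
  have hxT : x ∉ T := fun hxT => by
    have := hcon x hxT
    simp at this; linarith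
  have hmem : (insert x T).card ∈ P := by
    refine ⟨insert x T, ?_, ?_, rfl⟩
    · intro y hy
      rcases Finset.mem_insert.1 hy with rfl | hy
      · exact hx
      · exact h1 y hy
    · intro c hc d hd hcd
      rcases Finset.mem_insert.1 hc with hc' | hc' <;>
        rcases Finset.mem_insert.1 hd with hd' | hd'
      · exact absurd (hc'.trans hd'.symm) hcd
      · rw [hc']; exact (hcon d hd').le
      · rw [norm_sub_rev, hd']; exact (hcon c hc').le
      · exact h2 c hc' d hd' hcd
  have := le_csSup hbdd hmem
  rw [Finset.card_insert_of_notMem hxT] at this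
  omega

/-- The coordinate subspace of vectors supported in `S`. -/
def coordSub {n : ℕ} (S : Finset (Fin n)) : Submodule ℝ (EuclideanSpace ℝ (Fin n)) where
  carrier := {x | ∀ i ∉ S, x i = 0}
  add_mem' := by
    intro x y hx hy i hi
    simp [hx i hi, hy i hi]
  zero_mem' := by intro i _; rfl
  smul_mem' := by
    intro c x hx i hi
    simp [hx i hi]

lemma finrank_coordSub_le {n : ℕ} (S : Finset (Fin n)) :
    Module.finrank ℝ (coordSub S) ≤ S.card := by
  let f : coordSub S →ₗ[ℝ] (S → ℝ) :=
    { toFun := fun x i => x.1 i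
      map_add' := fun x y => by ext i; simp
      map_smul' := fun c x => by ext i; simp }
  have hf : Function.Injective f := by
    intro x y hxy
    ext i
    by_cases hi : i ∈ S
    · exact congrFun hxy ⟨i, hi⟩
    · rw [x.2 i hi, y.2 i hi]
  simpa using LinearMap.finrank_le_finrank_of_injective hf

/-- The union, over all supports `S` of size `K`, of nets of the unit spheres of the coordinate
subspaces. The approximating point keeps the support of the vector it approximates. -/
lemma exists_sparse_net (n K : ℕ) {ε : ℝ} (hε : 0 < ε) (hε1 : ε ≤ 1) :
    ∃ T : Finset (Fin n → ℝ), (∀ x ∈ T, l2 x = 1) ∧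
      (T.card : ℝ) ≤ n.choose K * (3 / ε) ^ K ∧
      ∀ S : Finset (Fin n), S.card = K → ∀ a : Fin n → ℝ, (∀ i ∉ S, a i = 0) → l2 a = 1 →
        ∃ a₀ ∈ T, (∀ i ∉ S, a₀ i = 0) ∧ l2 (a - a₀) ≤ ε := by
  classical
  choose net h1 h2 h3 using fun S : Finset (Fin n) => exists_sphere_net (coordSub S) hε hε1
  refine ⟨(Finset.univ.powersetCard K).biUnion fun S =>
    (net S).image fun x => WithLp.ofLp x.1, ?_, ?_, ?_⟩
  · intro x hx
    simp only [Finset.mem_biUnion, Finset.mem_image] at hx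
    obtain ⟨S, _, y, hy, rfl⟩ := hx
    rw [l2_eq_norm]
    exact h1 S y hy
  · have hc : ∀ S ∈ Finset.powersetCard K (Finset.univ : Finset (Fin n)),
        ((((net S).image fun x => WithLp.ofLp x.1).card : ℕ) : ℝ) ≤ (3 / ε) ^ K := by
      intro S hS
      refine (Nat.cast_le.2 Finset.card_image_le).trans ((h2 S).trans ?_)
      apply pow_le_pow_right₀
      · rw [le_div_iff₀ hε]; linarith
      · exact (finrank_coordSub_le S).trans (Finset.mem_powersetCard.1 hS).2.le
    refine (Nat.cast_le.2 Finset.card_biUnion_le).trans ?_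
    rw [Nat.cast_sum]
    refine (Finset.sum_le_card_nsmul _ _ _ hc).trans ?_
    simp
  · intro S hS a ha ha1
    obtain ⟨y, hy, hay⟩ := h3 S ⟨WithLp.toLp 2 a, ha⟩ (by rw [l2_eq_norm] at ha1; exact ha1)
    refine ⟨WithLp.ofLp y.1, ?_, y.2, ?_⟩
    · simp only [Finset.mem_biUnion, Finset.mem_image]
      exact ⟨S, by simp [Finset.mem_powersetCard, hS], y, hy, rfl⟩
    · rw [l2_eq_norm]; exact hay

/-! ### From the net to all sparse vectors -/

lemma ip_sub_right {n : ℕ} (u v w : Fin n → ℝ) : ip u (v - w) = ip u v - ip u w := by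
  simp [ip, mul_sub]

lemma ip_smul_right {n : ℕ} (u v : Fin n → ℝ) (r : ℝ) : ip u (r • v) = r * ip u v := by
  simp only [ip, Finset.mul_sum, Pi.smul_apply, smul_eq_mul]
  exact Finset.sum_congr rfl fun x _ => by ring

/-- A bound for the energies `∑ⱼ ⟨φⱼ, u⟩²` on a net of the unit sphere of a coordinate subspace
bounds them on the whole subspace: the net point absorbs half of the operator norm. -/
lemma energy_of_net {M n : ℕ} (Φ : Fin M → Fin n → ℝ) {ε : ℝ} (hε1 : ε ≤ 1 / 2)
    (S : Finset (Fin n)) (T : Finset (Fin n → ℝ))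
    (hT : ∀ a : Fin n → ℝ, (∀ i ∉ S, a i = 0) → l2 a = 1 →
        ∃ a₀ ∈ T, (∀ i ∉ S, a₀ i = 0) ∧ l2 (a - a₀) ≤ ε)
    (hE : ∀ a ∈ T, ∑ j, ip (Φ j) a ^ 2 ≤ 4 * M) (u : Fin n → ℝ) (hu : ∀ i ∉ S, u i = 0) :
    ∑ j, ip (Φ j) u ^ 2 ≤ 16 * M * l2 u ^ 2 := by
  let L₀ : coordSub S →ₗ[ℝ] EuclideanSpace ℝ (Fin M) :=
    { toFun := fun x => WithLp.toLp 2 fun j => ip (Φ j) (WithLp.ofLp x.1)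
      map_add' := fun x y => by ext j; simp [ip, mul_add, Finset.sum_add_distrib]
      map_smul' := fun c x => by
        ext j
        simp only [ip, Finset.mul_sum, Submodule.coe_smul, WithLp.ofLp_smul, Pi.smul_apply,
          smul_eq_mul, RingHom.id_apply]
        exact Finset.sum_congr rfl fun x _ => by ring }
  let L : coordSub S →L[ℝ] EuclideanSpace ℝ (Fin M) := LinearMap.toContinuousLinearMap L₀
  have hL : ∀ x, ‖L x‖ ^ 2 = ∑ j, ip (Φ j) (WithLp.ofLp x.1) ^ 2 := by
    intro x
    rw [EuclideanSpace.real_norm_sq_eq]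
    rfl
  have hbound : ‖L‖ ≤ 2 * √M + ‖L‖ / 2 := by
    refine ContinuousLinearMap.opNorm_le_of_unit_norm (by positivity) fun x hx => ?_
    obtain ⟨y, hyT, hyS, hxy⟩ := hT (WithLp.ofLp x.1) x.2 (by rw [l2_eq_norm]; exact hx)
    let y' : coordSub S := ⟨WithLp.toLp 2 y, hyS⟩
    have h1 : ‖L y'‖ ≤ 2 * √M := by
      refine abs_le_of_sq_le_sq' ?_ (by positivity) |>.2
      rw [hL, mul_pow, Real.sq_sqrt (Nat.cast_nonneg M)]
      linarith [hE y hyT]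
    have h2 : ‖L (x - y')‖ ≤ ‖L‖ / 2 := by
      refine (L.le_opNorm _).trans ?_
      have h3 : ‖x - y'‖ ≤ ε := by rw [l2_eq_norm] at hxy; exact hxy
      nlinarith [norm_nonneg L]
    calc ‖L x‖ = ‖L y' + L (x - y')‖ := by rw [← map_add]; congr 2; abel
      _ ≤ _ := (norm_add_le _ _).trans (add_le_add h1 h2)
  have h4 : ‖L‖ ≤ 4 * √M := by linarith
  let u' : coordSub S := ⟨WithLp.toLp 2 u, hu⟩
  have h5 : ‖L u'‖ ≤ 4 * √M * l2 u := by
    refine (L.le_opNorm u').trans ?_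
    rw [l2_eq_norm]
    exact mul_le_mul_of_nonneg_right h4 (norm_nonneg _)
  have h6 := hL u'
  calc ∑ j, ip (Φ j) u ^ 2 = ‖L u'‖ ^ 2 := h6.symm
    _ ≤ (4 * √M * l2 u) ^ 2 := by gcongr
    _ = _ := by rw [mul_pow, mul_pow, Real.sq_sqrt (Nat.cast_nonneg M)]; ring

/-- The signs of `x` and `y` can only differ when `x` is small or `y - x` is large. -/
lemma sgn_sub_sq_le (x y : ℝ) {τ : ℝ} (hτ : 0 < τ) :
    (sgn y - sgn x) ^ 2 ≤ 4 * ((if |x| ≤ τ then (1 : ℝ) else 0) + (y - x) ^ 2 / τ ^ 2) := by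
  have h0 : 0 ≤ (y - x) ^ 2 / τ ^ 2 := by positivity
  by_cases hx : |x| ≤ τ
  · rw [if_pos hx]
    have : (sgn y - sgn x) ^ 2 ≤ 4 := by unfold sgn; split_ifs <;> norm_num
    linarith
  · rw [if_neg hx]
    by_cases hs : sgn y = sgn x
    · rw [hs]; simp; positivity
    · have h1 : |x| ≤ |y - x| := by
        unfold sgn at hs
        split_ifs at hs with h2 h3 h3
        · exact absurd rfl hs
        · rw [abs_of_nonpos (not_lt.1 h3), abs_of_nonneg] <;> linarith
        · rw [abs_of_pos h3, abs_of_nonpos] <;> linarith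
        · exact absurd rfl hs
      have h2 : 1 ≤ (y - x) ^ 2 / τ ^ 2 := by
        rw [one_le_div (by positivity), ← sq_abs (y - x)]
        gcongr
        linarith
      have : (sgn y - sgn x) ^ 2 ≤ 4 := by unfold sgn; split_ifs <;> norm_num
      linarith

/-- The (unnormalized) deviation of the empirical sign product from its expectation. -/
noncomputable def dev {M n : ℕ} (Φ : Fin M → Fin n → ℝ) (a b : Fin n → ℝ) : ℝ :=
  ∑ j, (sgn (ip (Φ j) a) * ip (Φ j) b - √(2 / π) * ip a b)

lemma dev_sub {M n : ℕ} (Φ : Fin M → Fin n → ℝ) (a b c : Fin n → ℝ) :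
    dev Φ a (b - c) = dev Φ a b - dev Φ a c := by
  simp only [dev, ip_sub_right, ← Finset.sum_sub_distrib]
  exact Finset.sum_congr rfl fun j _ => by ring

lemma dev_smul {M n : ℕ} (Φ : Fin M → Fin n → ℝ) (a b : Fin n → ℝ) (r : ℝ) :
    dev Φ a (r • b) = r * dev Φ a b := by
  simp only [dev, ip_smul_right, Finset.mul_sum]
  exact Finset.sum_congr rfl fun j _ => by ring

/-- Passing from net points to arbitrary unit vectors. The sign pattern changes in few places,
which Cauchy–Schwarz turns into a small error. -/
lemma dev_of_net {M n : ℕ} (Φ : Fin M → Fin n → ℝ) {δ : ℝ} (hδ : 0 < δ) (hδ1 : δ ≤ 1)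
    {a b a₀ b₀ : Fin n → ℝ} (ha : l2 a = 1) (hb : l2 b = 1) (hb₀ : l2 b₀ = 1)
    (haa : l2 (a - a₀) ≤ δ ^ 3 / 16000000) (hbb : l2 (b - b₀) ≤ δ ^ 3 / 16000000)
    (hdev : |dev Φ a₀ b₀| ≤ M * (δ / 8))
    (hcount : ∑ j, (if |ip (Φ j) a₀| ≤ δ ^ 2 / 10000 / 4 then (1 : ℝ) else 0)
      ≤ M * (δ ^ 2 / 10000))
    (hEa : ∑ j, ip (Φ j) (a - a₀) ^ 2 ≤ 16 * M * l2 (a - a₀) ^ 2)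
    (hEb : ∑ j, ip (Φ j) b ^ 2 ≤ 16 * M * l2 b ^ 2)
    (hEbb : ∑ j, ip (Φ j) (b - b₀) ^ 2 ≤ 16 * M * l2 (b - b₀) ^ 2) :
    |dev Φ a b| ≤ M * (δ / 2) := by
  have hM : (0 : ℝ) ≤ M := Nat.cast_nonneg M
  have hl2 : ∀ v : Fin n → ℝ, 0 ≤ l2 v := fun v => Real.sqrt_nonneg _
  have hδ3 : δ ^ 3 ≤ δ := by
    calc δ ^ 3 ≤ δ ^ 1 := pow_le_pow_of_le_one hδ.le hδ1 (by norm_num)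
      _ = δ := pow_one δ
  set A := ∑ j, (sgn (ip (Φ j) a) - sgn (ip (Φ j) a₀)) * ip (Φ j) b with hA
  set B := ∑ j, sgn (ip (Φ j) a₀) * ip (Φ j) (b - b₀) with hB
  have hsplit : dev Φ a b = A + B + dev Φ a₀ b₀ + M * (√(2 / π) * (ip a₀ b₀ - ip a b)) := by
    have : (M : ℝ) * (√(2 / π) * (ip a₀ b₀ - ip a b)) =
        ∑ j : Fin M, √(2 / π) * (ip a₀ b₀ - ip a b) := by simp
    rw [this, hA, hB]
    unfold dev
    rw [← Finset.sum_add_distrib, ← Finset.sum_add_distrib, ← Finset.sum_add_distrib]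
    refine Finset.sum_congr rfl fun j _ => ?_
    rw [ip_sub_right]; ring
  have hAle : |A| ≤ M * (δ / 8) := by
    refine abs_le_of_sq_le_sq ?_ (by positivity)
    have hcs := Finset.sum_mul_sq_le_sq_mul_sq Finset.univ
      (fun j => sgn (ip (Φ j) a) - sgn (ip (Φ j) a₀)) (fun j => ip (Φ j) b)
    have hτ : 0 < δ ^ 2 / 10000 / 4 := by positivity
    have h1 : ∑ j, (sgn (ip (Φ j) a) - sgn (ip (Φ j) a₀)) ^ 2 ≤ 4 * (M * (δ ^ 2 / 5000)) := by
      calc _ ≤ ∑ j, 4 * ((if |ip (Φ j) a₀| ≤ δ ^ 2 / 10000 / 4 then (1 : ℝ) else 0) +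
            (ip (Φ j) (a - a₀)) ^ 2 / (δ ^ 2 / 10000 / 4) ^ 2) := by
            refine Finset.sum_le_sum fun j _ => ?_
            rw [ip_sub_right]
            exact sgn_sub_sq_le _ _ hτ
        _ = 4 * (∑ j, (if |ip (Φ j) a₀| ≤ δ ^ 2 / 10000 / 4 then (1 : ℝ) else 0) +
            (∑ j, (ip (Φ j) (a - a₀)) ^ 2) / (δ ^ 2 / 10000 / 4) ^ 2) := by
            rw [← Finset.mul_sum, Finset.sum_add_distrib, Finset.sum_div]
        _ ≤ 4 * (M * (δ ^ 2 / 10000) +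
            16 * M * (δ ^ 3 / 16000000) ^ 2 / (δ ^ 2 / 10000 / 4) ^ 2) := by
            have : l2 (a - a₀) ^ 2 ≤ (δ ^ 3 / 16000000) ^ 2 := by
              have := hl2 (a - a₀)
              gcongr
            gcongr
            exact hEa.trans (by gcongr)
        _ = _ := by field_simp; ring
    have h2 : ∑ j, ip (Φ j) b ^ 2 ≤ 16 * M := by rw [hb] at hEb; linarith
    calc A ^ 2 ≤ _ := hcs
      _ ≤ (4 * (M * (δ ^ 2 / 5000))) * (16 * M) := by
        gcongr
      _ ≤ _ := by nlinarith [mul_nonneg (mul_nonneg hM hM) (sq_nonneg δ)]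
  have hBle : |B| ≤ M * (δ / 8) := by
    refine abs_le_of_sq_le_sq ?_ (by positivity)
    have hcs := Finset.sum_mul_sq_le_sq_mul_sq Finset.univ
      (fun j => sgn (ip (Φ j) a₀)) (fun j => ip (Φ j) (b - b₀))
    have h1 : ∑ j : Fin M, sgn (ip (Φ j) a₀) ^ 2 = M := by
      have : ∀ t, sgn t ^ 2 = 1 := fun t => by rw [← sq_abs, abs_sgn]; norm_num
      simp [this]
    have h2 : l2 (b - b₀) ^ 2 ≤ (δ / 1000) ^ 2 := by
      have := hl2 (b - b₀)
      gcongr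
      linarith
    rw [h1] at hcs
    calc B ^ 2 ≤ _ := hcs
      _ ≤ M * (16 * M * (δ / 1000) ^ 2) := by gcongr; exact hEbb.trans (by gcongr)
      _ ≤ _ := by nlinarith [mul_nonneg (mul_nonneg hM hM) (sq_nonneg δ)]
  have hDle : |(M : ℝ) * (√(2 / π) * (ip a₀ b₀ - ip a b))| ≤ M * (δ / 8) := by
    rw [abs_mul, abs_of_nonneg hM, abs_mul, abs_of_nonneg (Real.sqrt_nonneg _)]
    gcongr
    have h1 : |ip a₀ b₀ - ip a b| ≤ δ / 8 := by
      have h2 : ip a₀ b₀ - ip a b = -ip b₀ (a - a₀) - ip a (b - b₀) := by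
        have hc : ∀ u v : Fin n → ℝ, ip u v = ip v u := fun u v => by simp [ip, mul_comm]
        rw [ip_sub_right, ip_sub_right, hc b₀ a, hc b₀ a₀]; ring
      have h3 := abs_ip_le b₀ (a - a₀)
      have h4 := abs_ip_le a (b - b₀)
      rw [hb₀, one_mul] at h3
      rw [ha, one_mul] at h4
      rw [h2]
      refine (abs_sub _ _).trans ?_
      rw [abs_neg]
      linarith
    nlinarith [sqrt_two_div_pi_le_one, Real.sqrt_nonneg (2 / π), abs_nonneg (ip a₀ b₀ - ip a b)]
  rw [hsplit]
  refine (abs_add_le _ _).trans ?_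
  have := abs_add_le (A + B) (dev Φ a₀ b₀)
  have := abs_add_le A B
  linarith

/-! ### Union bound -/

/-- The net of resolution `δ³ / 16000000` on sparse unit vectors is small enough for a union bound
over pairs of its points. -/
lemma net_card_bound {N K M : ℕ} {δ : ℝ} (hK : 0 < K) (hKN : K ≤ N) (hδ : 0 < δ) (hδ1 : δ ≤ 1)
    (hM : 100000000 * δ⁻¹ ^ 6 * K * Real.log (2 * N / K) ≤ (M : ℝ)) {c : ℝ} (hc0 : 0 ≤ c)
    (hc : c ≤ N.choose K * (3 / (δ ^ 3 / 16000000)) ^ K) :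
    c ^ 2 ≤ rexp (δ ^ 2 / 131072 * M) := by
  have hK' : (0 : ℝ) < K := Nat.cast_pos.2 hK
  have hN' : (K : ℝ) ≤ N := Nat.cast_le.2 hKN
  have hN0 : (0 : ℝ) < N := hK'.trans_le hN'
  set L := Real.log (2 * N / K) with hL
  set D := δ⁻¹ with hD
  have hD1 : 1 ≤ D := (one_le_inv₀ hδ).2 hδ1
  have hD4 : D ≤ D ^ 4 := by
    calc D = D ^ 1 := (pow_one D).symm
      _ ≤ D ^ 4 := pow_le_pow_right₀ hD1 (by norm_num)
  have hL1 : 1 / 2 ≤ L := by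
    have h1 : Real.log 2 ≤ L := by
      apply Real.log_le_log (by norm_num)
      rw [le_div_iff₀ hK']; linarith
    linarith [Real.log_two_gt_d9]
  have hchoose : (N.choose K : ℝ) ≤ (rexp 1 * (N / K)) ^ K := by
    refine (Nat.choose_le_pow_div K N).trans ?_
    have h1 := Real.pow_div_factorial_le_exp (x := K) hK'.le K
    have h2 : rexp K = rexp 1 ^ K := by rw [← Real.exp_nat_mul, mul_one]
    rw [h2] at h1
    rw [mul_pow, div_pow]
    calc (N : ℝ) ^ K / K.factorial = (K : ℝ) ^ K / K.factorial * ((N : ℝ) ^ K / (K : ℝ) ^ K) := by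
          field_simp
      _ ≤ _ := by gcongr
  have hNK : (N : ℝ) / K ≤ rexp L := by
    rw [hL, Real.exp_log (by positivity)]
    gcongr; linarith
  have h48 : (48000000 : ℝ) ≤ rexp 20 := by
    have h1 : rexp 20 = rexp 1 ^ 20 := by rw [← Real.exp_nat_mul]; norm_num
    rw [h1]
    calc (48000000 : ℝ) ≤ 2.7 ^ 20 := by norm_num
      _ ≤ _ := by
        gcongr
        linarith [Real.exp_one_gt_d9]
  have hDexp : D ≤ rexp D := by linarith [Real.add_one_le_exp D]
  have h3 : 3 / (δ ^ 3 / 16000000) = 48000000 * D ^ 3 := by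
    rw [hD]; field_simp; norm_num
  have hc' : c ≤ rexp (1 + L + 20 + 3 * D) ^ K := by
    refine hc.trans ?_
    rw [h3]
    calc _ ≤ (rexp 1 * (N / K)) ^ K * (48000000 * D ^ 3) ^ K := by gcongr
      _ = (rexp 1 * (N / K) * (48000000 * D ^ 3)) ^ K := by rw [mul_pow _ (48000000 * D ^ 3)]
      _ ≤ (rexp 1 * rexp L * (rexp 20 * rexp D ^ 3)) ^ K := by gcongr
      _ = _ := by
        rw [← Real.exp_nat_mul D 3, ← Real.exp_add, ← Real.exp_add, ← Real.exp_add]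
        congr 2; push_cast; ring
  have hexp : 2 * (K * (1 + L + 20 + 3 * D)) ≤ δ ^ 2 / 131072 * M := by
    have h4 : δ ^ 2 * (100000000 * D ^ 6 * K * L) ≤ δ ^ 2 * M := by gcongr
    have h5 : δ ^ 2 * (100000000 * D ^ 6 * K * L) = 100000000 * D ^ 4 * K * L := by
      rw [hD]; field_simp
    have h6 : 1 + L + 20 + 3 * D ≤ 49 * (D ^ 4 * L) := by
      have : 1 ≤ D ^ 4 := hD1.trans hD4
      nlinarith
    have h7 : K * (1 + L + 20 + 3 * D) ≤ K * (49 * (D ^ 4 * L)) := by gcongr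
    have h8 : 0 ≤ D ^ 4 * K * L := by positivity
    nlinarith
  calc c ^ 2 ≤ (rexp (1 + L + 20 + 3 * D) ^ K) ^ 2 := by gcongr
    _ = rexp (2 * (K * (1 + L + 20 + 3 * D))) := by
      rw [← Real.exp_nat_mul, ← Real.exp_nat_mul]; norm_num
    _ ≤ _ := Real.exp_le_exp.2 hexp

theorem gaussian_sign_product_concentration :
    ∃ C c : ℝ, 0 < C ∧ 0 < c ∧
      ∀ (N M K : ℕ) (δ : ℝ), 0 < N → 0 < M → 0 < K → K ≤ N →
        δ ∈ Set.Ioc (0 : ℝ) 1 →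
        C * δ⁻¹ ^ 6 * K * Real.log (2 * N / K) ≤ (M : ℝ) →
        ENNReal.ofReal (1 - 8 * Real.exp (-c * δ ^ 2 * M)) ≤
          (Measure.pi fun _ : Fin M => Measure.pi fun _ : Fin N => gaussianReal 0 1)
            {Φ : Fin M → Fin N → ℝ |
              ∀ a : Fin N → ℝ, sparse K a → l2 a = 1 →
              ∀ b₁ b₂ : Fin N → ℝ, sparse K b₁ → sparse K b₂ → l2 b₁ ≤ 1 → l2 b₂ ≤ 1 →
                |(1 / (M : ℝ)) * ∑ j, sgn (ip (Φ j) a) * ip (Φ j) (b₁ - b₂) -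
                    Real.sqrt (2 / Real.pi) * ip a (b₁ - b₂)| ≤ δ} := by
  classical
  refine ⟨100000000, 1 / 131072, by norm_num, by norm_num, ?_⟩
  rintro N M K δ _ hM hK hKN ⟨hδ, hδ1⟩ hbig
  have hM0 : (0 : ℝ) < M := Nat.cast_pos.2 hM
  set ε := δ ^ 3 / 16000000 with hε
  have hε0 : 0 < ε := by positivity
  have hε1 : ε ≤ 1 / 2 := by
    have : δ ^ 3 ≤ 1 := pow_le_one₀ hδ.le hδ1
    rw [hε]; linarith
  obtain ⟨T, hT1, hTcard, hTnet⟩ := exists_sparse_net N K hε0 (by linarith)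
  set good : Set (Fin M → Fin N → ℝ) := {Φ | ∀ a : Fin N → ℝ, sparse K a → l2 a = 1 →
    ∀ b₁ b₂ : Fin N → ℝ, sparse K b₁ → sparse K b₂ → l2 b₁ ≤ 1 → l2 b₂ ≤ 1 →
      |(1 / (M : ℝ)) * ∑ j, sgn (ip (Φ j) a) * ip (Φ j) (b₁ - b₂) -
        Real.sqrt (2 / Real.pi) * ip a (b₁ - b₂)| ≤ δ} with hgood
  set bad : (Fin N → ℝ) × (Fin N → ℝ) → Set (Fin M → Fin N → ℝ) := fun p =>
    {Φ | M * (δ / 8) < |∑ j, (sgn (ip (Φ j) p.1) * ip (Φ j) p.2 - √(2 / π) * ip p.1 p.2)|} ∪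
    ({Φ | M * (δ ^ 2 / 10000) <
        ∑ j, if |ip (Φ j) p.1| ≤ δ ^ 2 / 10000 / 4 then (1 : ℝ) else 0} ∪
      {Φ | 4 * M < ∑ j, ip (Φ j) p.1 ^ 2}) with hbad
  set P := rexp (-(δ ^ 2 / 65536 * M)) with hP
  have hbadP : ∀ p ∈ T ×ˢ T, matLaw M N (bad p) ≤ ENNReal.ofReal (4 * P) := by
    rintro ⟨a, b⟩ hp
    obtain ⟨ha, hb⟩ := Finset.mem_product.1 hp
    have h1 := sign_mean_tail M (hT1 a ha) (hT1 b hb) (t := δ / 8) (by positivity) (by linarith)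
    have h2 := small_count_tail M (hT1 a ha) (t := δ ^ 2 / 10000) (by positivity)
    have h3 := energy_tail M (hT1 a ha)
    have hδ2 : δ ^ 2 ≤ 1 := pow_le_one₀ hδ.le hδ1
    have e1 : rexp (-((δ / 8) ^ 2 / 1024 * M)) ≤ P := by
      apply Real.exp_le_exp.2; apply le_of_eq; ring
    have e2 : rexp (-(δ ^ 2 / 10000 / 2 * M)) ≤ P := by
      apply Real.exp_le_exp.2
      nlinarith [mul_nonneg (sq_nonneg δ) hM0.le]
    have e3 : rexp (-(1 / 2 * M)) ≤ P := by
      apply Real.exp_le_exp.2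
      nlinarith
    have hsum : ENNReal.ofReal (4 * P) = 2 * ENNReal.ofReal P +
        (ENNReal.ofReal P + ENNReal.ofReal P) := by
      rw [← two_mul, ← add_mul, ENNReal.ofReal_mul (by norm_num)]
      norm_num
    rw [hsum]
    refine (measure_union_le _ _).trans (add_le_add (h1.trans ?_)
      ((measure_union_le _ _).trans (add_le_add (h2.trans ?_) (h3.trans ?_))))
    · gcongr
    · gcongr
    · gcongr
  -- Off the bad events, the estimate holds for all sparse vectors.
  have hdet : goodᶜ ⊆ ⋃ p ∈ T ×ˢ T, bad p := by
    rw [Set.compl_subset_comm]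
    intro Φ hΦ
    have hΦ' : ∀ a ∈ T, ∀ b ∈ T, |dev Φ a b| ≤ M * (δ / 8) ∧
        (∑ j, (if |ip (Φ j) a| ≤ δ ^ 2 / 10000 / 4 then (1 : ℝ) else 0) ≤ M * (δ ^ 2 / 10000)) ∧
        ∑ j, ip (Φ j) a ^ 2 ≤ 4 * M := by
      intro a ha b hb
      have h0 : Φ ∉ bad (a, b) := fun h =>
        hΦ (Set.mem_biUnion (Finset.mem_coe.2 (Finset.mk_mem_product ha hb)) h)
      simp only [hbad, Set.mem_union, Set.mem_ofPred_eq, not_or, not_lt] at h0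
      exact h0
    have hE : ∀ S : Finset (Fin N), S.card = K → ∀ u : Fin N → ℝ, (∀ i ∉ S, u i = 0) →
        ∑ j, ip (Φ j) u ^ 2 ≤ 16 * M * l2 u ^ 2 := fun S hS u hu =>
      energy_of_net Φ hε1 S T (hTnet S hS) (fun a ha => (hΦ' a ha a ha).2.2) u hu
    have hsupp : ∀ u : Fin N → ℝ, sparse K u →
        ∃ S : Finset (Fin N), S.card = K ∧ ∀ i ∉ S, u i = 0 := by
      intro u hu
      obtain ⟨S, hS1, hS2⟩ := Finset.exists_superset_card_eq
        (s := Finset.univ.filter fun i => u i ≠ 0) (n := K) hu (by simpa using hKN)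
      refine ⟨S, hS2, fun i hi => ?_⟩
      by_contra h
      exact hi (hS1 (by simpa using h))
    have hunit : ∀ a b : Fin N → ℝ, sparse K a → sparse K b → l2 a = 1 → l2 b = 1 →
        |dev Φ a b| ≤ M * (δ / 2) := by
      intro a b ha hb ha1 hb1
      obtain ⟨S, hS, haS⟩ := hsupp a ha
      obtain ⟨R, hR, hbR⟩ := hsupp b hb
      obtain ⟨a₀, ha₀T, ha₀S, haa⟩ := hTnet S hS a haS ha1
      obtain ⟨b₀, hb₀T, hb₀R, hbb⟩ := hTnet R hR b hbR hb1
      obtain ⟨h1, h2, -⟩ := hΦ' a₀ ha₀T b₀ hb₀T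
      exact dev_of_net Φ hδ hδ1 ha1 hb1 (hT1 b₀ hb₀T) haa hbb h1 h2
        (hE S hS _ fun i hi => by simp [haS i hi, ha₀S i hi]) (hE R hR b hbR)
        (hE R hR _ fun i hi => by simp [hbR i hi, hb₀R i hi])
    have hball : ∀ a b : Fin N → ℝ, sparse K a → sparse K b → l2 a = 1 → l2 b ≤ 1 →
        |dev Φ a b| ≤ M * (δ / 2) := by
      intro a b ha hb ha1 hb1
      rcases eq_or_ne b 0 with rfl | hb0
      · have : dev Φ a 0 = 0 := by simp [dev, ip]
        rw [this, abs_zero]; positivity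
      have hr : 0 < l2 b := by
        rw [l2_eq_norm, norm_pos_iff]
        intro h
        exact hb0 (by simpa using h)
      have h1 : b = l2 b • ((l2 b)⁻¹ • b) := by rw [smul_smul, mul_inv_cancel₀ hr.ne', one_smul]
      have h2 : l2 ((l2 b)⁻¹ • b) = 1 := by
        rw [l2_eq_norm, WithLp.toLp_smul, norm_smul, ← l2_eq_norm, norm_inv, Real.norm_eq_abs,
          abs_of_pos hr, inv_mul_cancel₀ hr.ne']
      have h3 : sparse K ((l2 b)⁻¹ • b) := by
        refine le_trans (Finset.card_le_card ?_) hb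
        intro i hi
        simp only [Finset.mem_filter, Finset.mem_univ, true_and, Pi.smul_apply,
          smul_eq_mul] at hi ⊢
        exact right_ne_zero_of_mul hi
      have h4 := hunit a _ ha h3 ha1 h2
      rw [h1, dev_smul, abs_mul, abs_of_pos hr]
      calc _ ≤ 1 * |dev Φ a ((l2 b)⁻¹ • b)| := by gcongr
        _ ≤ _ := by rw [one_mul]; exact h4
    intro a ha ha1 b₁ b₂ hb₁ hb₂ hn₁ hn₂
    have h1 := hball a b₁ ha hb₁ ha1 hn₁
    have h2 := hball a b₂ ha hb₂ ha1 hn₂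
    have h3 : (1 / (M : ℝ)) * ∑ j, sgn (ip (Φ j) a) * ip (Φ j) (b₁ - b₂) -
        √(2 / π) * ip a (b₁ - b₂) = (dev Φ a b₁ - dev Φ a b₂) / M := by
      rw [← dev_sub]
      simp only [dev, Finset.sum_sub_distrib, Finset.sum_const, Finset.card_univ,
        Fintype.card_fin, nsmul_eq_mul]
      field_simp
    rw [h3, abs_div, abs_of_pos hM0, div_le_iff₀ hM0]
    refine (abs_sub _ _).trans ?_
    linarith
  have hcard := net_card_bound hK hKN hδ hδ1 hbig (Nat.cast_nonneg T.card) hTcard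
  have hcompl : matLaw M N goodᶜ ≤ ENNReal.ofReal (8 * rexp (-(1 / 131072) * δ ^ 2 * M)) := by
    calc matLaw M N goodᶜ ≤ ∑ p ∈ T ×ˢ T, matLaw M N (bad p) :=
          (measure_mono hdet).trans (measure_biUnion_finset_le _ _)
      _ ≤ (T ×ˢ T).card • ENNReal.ofReal (4 * P) := Finset.sum_le_card_nsmul _ _ _ hbadP
      _ = ENNReal.ofReal ((T.card : ℝ) ^ 2 * (4 * P)) := by
          rw [nsmul_eq_mul, Finset.card_product, sq, ← Nat.cast_mul,
            ENNReal.ofReal_mul (p := ((T.card * T.card : ℕ) : ℝ)) (by positivity),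
            ENNReal.ofReal_natCast]
      _ ≤ _ := by
          apply ENNReal.ofReal_le_ofReal
          have hPsplit : rexp (δ ^ 2 / 131072 * M) * P = rexp (-(1 / 131072) * δ ^ 2 * M) := by
            rw [hP, ← Real.exp_add]; congr 1; ring
          calc (T.card : ℝ) ^ 2 * (4 * P) ≤ rexp (δ ^ 2 / 131072 * M) * (4 * P) := by gcongr
            _ = 4 * rexp (-(1 / 131072) * δ ^ 2 * M) := by rw [← hPsplit]; ring
            _ ≤ _ := by linarith [Real.exp_pos (-(1 / 131072) * δ ^ 2 * M)]
  -- Subadditivity of the outer measure suffices; measurability of `good` is not needed.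
  have htotal : (1 : ENNReal) ≤ matLaw M N good + matLaw M N goodᶜ := by
    rw [← measure_univ (μ := matLaw M N), ← Set.union_compl_self good]
    exact measure_union_le _ _
  rw [ENNReal.ofReal_sub _ (by positivity), ENNReal.ofReal_one, tsub_le_iff_right]
  exact htotal.trans (by gcongr)
end

section
/- Let x, h ∈ ℝ^N with ‖x + h‖₁ ≤ ‖x‖₁, let K ≥ 1, and let T₀, T₁, …, T_L be pairwise disjoint subsets of {1,…,N} such that |T₀| = K, T₁ ∪ … ∪ T_L ⊇ supp(h) \ T₀, |T_k| = K for 1 ≤ k ≤ L−1, |T_L| ≤ K, and for every 1 ≤ k < L, every i ∈ T_k and every j ∈ T_{k+1} satisfy |h_i| ≥ |h_j|. Then Σ_{k=2}^{L} ‖h_{T_k}‖₂ ≤ ‖h_{T₀ ∪ T₁}‖₂ + 2·e₀, where e₀ = ‖x_{T₀ᶜ}‖₁/√K and T₀ᶜ = {1,…,N} \ T₀. -/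
/-!
The blocks are ordered by decreasing magnitude, so every entry of `h` on `T (k+1)` is at most the
average of `|h|` over `T k`; hence `‖h_{T (k+1)}‖₂ ≤ ‖h_{T k}‖₁ / √K` (`sqrt_block_le`). Summing over
the disjoint blocks bounds the tail by `‖h_{(T 0)ᶜ}‖₁ / √K`. Minimality `‖x + h‖₁ ≤ ‖x‖₁` gives the
cone condition `‖h_{(T 0)ᶜ}‖₁ ≤ ‖h_{T 0}‖₁ + 2 ‖x_{(T 0)ᶜ}‖₁` (`cone_condition`), and Cauchy–Schwarz
bounds `‖h_{T 0}‖₁` by `√K ‖h_{T 0}‖₂`.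
-/

open Finset MeasureTheory ProbabilityTheory Real

theorem l1_restrict {n : ℕ} (u : Fin n → ℝ) (S : Finset (Fin n)) :
    l1 (restrict u S) = ∑ i ∈ S, |u i| := by
  simp [l1, _root_.restrict, apply_ite abs]

theorem l2_restrict {n : ℕ} (u : Fin n → ℝ) (S : Finset (Fin n)) :
    l2 (restrict u S) = Real.sqrt (∑ i ∈ S, u i ^ 2) := by
  simp [l2, _root_.restrict, ite_pow]

/-- If every entry on `B` is dominated by every entry on `A`, then the `ℓ2` norm on `B` is controlled
by the `ℓ1` norm on `A`: each entry on `B` is at most the average of the `K` entries on `A`. -/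
theorem sqrt_block_le {n K : ℕ} (hK : 1 ≤ K) (h : Fin n → ℝ) (A B : Finset (Fin n))
    (hA : A.card = K) (hB : B.card ≤ K) (hAB : ∀ i ∈ A, ∀ j ∈ B, |h j| ≤ |h i|) :
    Real.sqrt (∑ j ∈ B, h j ^ 2) ≤ (∑ i ∈ A, |h i|) / Real.sqrt K := by
  have hKpos : (0 : ℝ) < K := by exact_mod_cast hK
  set S := ∑ i ∈ A, |h i| with hS
  have hSnn : 0 ≤ S := Finset.sum_nonneg fun i _ => abs_nonneg _
  have hj : ∀ j ∈ B, h j ^ 2 ≤ (S / K) ^ 2 := by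
    intro j hjB
    have h1 : A.card • |h j| ≤ S := Finset.card_nsmul_le_sum A _ _ fun i hi => hAB i hi j hjB
    rw [hA, nsmul_eq_mul] at h1
    rw [← sq_abs (h j)]
    have : |h j| ≤ S / K := by rw [le_div_iff₀ hKpos]; linarith
    gcongr
  apply Real.sqrt_le_iff.2 ⟨by positivity, ?_⟩
  calc ∑ j ∈ B, h j ^ 2 ≤ B.card • (S / K) ^ 2 := Finset.sum_le_card_nsmul _ _ _ hj
    _ ≤ K * (S / K) ^ 2 := by
      rw [nsmul_eq_mul]
      gcongr
    _ = (S / Real.sqrt K) ^ 2 := by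
      rw [div_pow, div_pow, Real.sq_sqrt hKpos.le]
      field_simp

theorem cone_condition {n : ℕ} (x h : Fin n → ℝ) (hxh : l1 (x + h) ≤ l1 x)
    (S : Finset (Fin n)) :
    ∑ i ∈ Sᶜ, |h i| ≤ ∑ i ∈ S, |h i| + 2 * ∑ i ∈ Sᶜ, |x i| := by
  unfold l1 at hxh
  rw [← Finset.sum_add_sum_compl S, ← Finset.sum_add_sum_compl S (fun i => |x i|)] at hxh
  have h1 : ∑ i ∈ S, (|x i| - |h i|) ≤ ∑ i ∈ S, |(x + h) i| :=
    Finset.sum_le_sum fun i _ => by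
      have := abs_sub_abs_le_abs_sub (x i) (-h i)
      simpa using this
  have h2 : ∑ i ∈ Sᶜ, (|h i| - |x i|) ≤ ∑ i ∈ Sᶜ, |(x + h) i| :=
    Finset.sum_le_sum fun i _ => by
      have := abs_sub_abs_le_abs_sub (h i) (-x i)
      simpa [add_comm] using this
  rw [Finset.sum_sub_distrib] at h1 h2
  linarith

theorem tail_l2_sum_le_head_plus_e0
    {N : ℕ} (x h : Fin N → ℝ) (hxh : l1 (x + h) ≤ l1 x)
    (K : ℕ) (hK : 1 ≤ K) (L : ℕ) (hL : 1 ≤ L) (T : ℕ → Finset (Fin N))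
    (hdisj : ∀ k l, k ≤ L → l ≤ L → k ≠ l → Disjoint (T k) (T l))
    (hcard0 : (T 0).card = K)
    (hcover : ∀ i, h i ≠ 0 → i ∉ T 0 → ∃ k, 1 ≤ k ∧ k ≤ L ∧ i ∈ T k)
    (hcard : ∀ k, 1 ≤ k → k < L → (T k).card = K)
    (hcardL : (T L).card ≤ K)
    (hmono : ∀ k, 1 ≤ k → k < L → ∀ i ∈ T k, ∀ j ∈ T (k + 1), |h j| ≤ |h i|) :
    ∑ k ∈ Finset.Icc 2 L, l2 (restrict h (T k)) ≤
      l2 (restrict h (T 0 ∪ T 1)) + 2 * (l1 (restrict x ((T 0)ᶜ)) / Real.sqrt K) := by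
  have hKpos : (0 : ℝ) < K := by exact_mod_cast hK
  have hsK : 0 < Real.sqrt K := Real.sqrt_pos.2 hKpos
  rw [l1_restrict, l2_restrict]
  have hcardle : ∀ k, 1 ≤ k → k ≤ L → (T k).card ≤ K := by
    intro k h1 h2
    rcases h2.lt_or_eq with h3 | rfl
    · exact (hcard k h1 h3).le
    · exact hcardL
  -- each tail block is charged to the block before it
  have htail : ∑ k ∈ Finset.Icc 2 L, l2 (restrict h (T k)) ≤
      ∑ k ∈ Finset.Icc 2 L, (∑ i ∈ T (k - 1), |h i|) / Real.sqrt K := by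
    refine Finset.sum_le_sum fun k hk => ?_
    obtain ⟨hk2, hkL⟩ := Finset.mem_Icc.1 hk
    rw [l2_restrict]
    refine sqrt_block_le hK h _ _ (hcard _ (by omega) (by omega)) (hcardle k (by omega) hkL) ?_
    have := hmono (k - 1) (by omega) (by omega)
    rwa [Nat.sub_add_cancel (by omega)] at this
  have hblocks : ∑ k ∈ Finset.Icc 2 L, (∑ i ∈ T (k - 1), |h i|) ≤ ∑ i ∈ (T 0)ᶜ, |h i| := by
    rw [← Finset.sum_biUnion]
    · refine Finset.sum_le_sum_of_subset_of_nonneg ?_ fun i _ _ => abs_nonneg _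
      intro i hi
      obtain ⟨k, hk, hik⟩ := Finset.mem_biUnion.1 hi
      obtain ⟨hk2, hkL⟩ := Finset.mem_Icc.1 hk
      rw [Finset.mem_compl]
      exact Finset.disjoint_left.1 (hdisj (k - 1) 0 (by omega) (by omega) (by omega)) hik
    · intro k hk l hl hkl
      obtain ⟨hk2, hkL⟩ := Finset.mem_Icc.1 (Finset.mem_coe.1 hk)
      obtain ⟨hl2, hlL⟩ := Finset.mem_Icc.1 (Finset.mem_coe.1 hl)
      exact hdisj (k - 1) (l - 1) (by omega) (by omega) (by omega)
  have hhead : ∑ i ∈ T 0, |h i| ≤ Real.sqrt K * Real.sqrt (∑ i ∈ T 0 ∪ T 1, h i ^ 2) := by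
    rw [← Real.sqrt_mul hKpos.le]
    apply Real.le_sqrt_of_sq_le
    have hcs := sq_sum_le_card_mul_sum_sq (s := T 0) (f := fun i => |h i|)
    simp only [sq_abs, hcard0] at hcs
    refine hcs.trans ?_
    gcongr
    exact Finset.subset_union_left
  have hcone := cone_condition x h hxh (T 0)
  rw [← Finset.sum_div] at htail
  refine htail.trans ?_
  rw [div_le_iff₀ hsK, add_mul, mul_assoc, div_mul_cancel₀ _ hsK.ne']
  linarith
end
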